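/- There exists a constant C > 0 such that for every T > 0 and every smooth solution u of the 1-dimensional Schrödinger flow with Neumann boundary conditions on [0,T], for all t ∈ [0,T]: ∫₀¹ |∂_t∂_x²u(x,t)|² dx ≤ C ‖∂_t²u(·,t)‖²_{L²} + C ( ‖u(·,t)‖²_{H²} + 1 )² ‖∂_t u(·,t)‖²_{H¹}. -/

import Mathlib

open MeasureTheory Set

noncomputable section

abbrev E3 := EuclideanSpace ℝ (Fin 3)

/-- The cross product on `EuclideanSpace ℝ (Fin 3)`. -/
def cross3 (a b : E3) : E3 :=
  (WithLp.equiv 2 (Fin 3 → ℝ)).symm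
    (crossProduct ((WithLp.equiv 2 (Fin 3 → ℝ)) a) ((WithLp.equiv 2 (Fin 3 → ℝ)) b))

/-- Partial derivative in the space variable of `u = u x t`. -/
def pdx (u : ℝ → ℝ → E3) : ℝ → ℝ → E3 := fun x t => deriv (fun y => u y t) x

/-- Partial derivative in the time variable of `u = u x t`. -/
def pdt (u : ℝ → ℝ → E3) : ℝ → ℝ → E3 := fun x t => deriv (fun s => u x s) t

/-- `u` is a smooth solution of the 1-dimensional Schrödinger flow with Neumann
boundary conditions on `[0,1] × [0,T]`. -/
def IsSol (T : ℝ) (u : ℝ → ℝ → E3) : Prop :=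
  ContDiff ℝ (⊤ : ℕ∞) (fun p : ℝ × ℝ => u p.1 p.2) ∧
  (∀ x ∈ Icc (0:ℝ) 1, ∀ t ∈ Icc (0:ℝ) T, ‖u x t‖ = 1) ∧
  (∀ x ∈ Icc (0:ℝ) 1, ∀ t ∈ Icc (0:ℝ) T, pdt u x t = cross3 (u x t) (pdx (pdx u) x t)) ∧
  (∀ t ∈ Icc (0:ℝ) T, pdx u 0 t = 0 ∧ pdx u 1 t = 0)

/-- Squared `L²` norm on `[0,1]`. -/
def L2sq (f : ℝ → E3) : ℝ := ∫ x in (0:ℝ)..1, ‖f x‖ ^ 2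

/-- Squared `H^k` Sobolev norm on `[0,1]`. -/
def Hsq (k : ℕ) (f : ℝ → E3) : ℝ :=
  ∑ j ∈ Finset.range (k + 1), ∫ x in (0:ℝ)..1, ‖deriv^[j] f x‖ ^ 2

lemma sob (f f' : ℝ → E3) (hf : ∀ x, HasDerivAt f (f' x) x) (hc : Continuous f')
    (x : ℝ) (hx : x ∈ Icc (0:ℝ) 1) :
    ‖f x‖ ^ 2 ≤ 2 * ((∫ y in (0:ℝ)..1, ‖f y‖ ^ 2) + ∫ y in (0:ℝ)..1, ‖f' y‖ ^ 2) := by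
  have hfc : Continuous f := continuous_iff_continuousAt.2 fun x => (hf x).continuousAt
  have hd : ∀ x, HasDerivAt (fun x => ‖f x‖ ^ 2) (2 * inner ℝ (f x) (f' x)) x :=
    fun x => (hf x).norm_sq
  have hdc : Continuous fun x => 2 * inner ℝ (f x) (f' x) := by fun_prop
  have hadd : ∫ y in (0:ℝ)..1, (‖f y‖ ^ 2 + ‖f' y‖ ^ 2) =
      (∫ y in (0:ℝ)..1, ‖f y‖ ^ 2) + ∫ y in (0:ℝ)..1, ‖f' y‖ ^ 2 :=
    intervalIntegral.integral_add ((by fun_prop : Continuous _).intervalIntegrable _ _)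
      ((by fun_prop : Continuous _).intervalIntegrable _ _)
  set A := (∫ y in (0:ℝ)..1, ‖f y‖ ^ 2) + ∫ y in (0:ℝ)..1, ‖f' y‖ ^ 2 with hA
  have hb : ∀ y, ‖2 * inner ℝ (f y) (f' y)‖ ≤ ‖f y‖ ^ 2 + ‖f' y‖ ^ 2 := by
    intro y
    rw [norm_mul, Real.norm_eq_abs, Real.norm_eq_abs]
    have := abs_real_inner_le_norm (f y) (f' y)
    rw [abs_two]
    nlinarith [sq_nonneg (‖f y‖ - ‖f' y‖)]
  have key : ∀ y ∈ Icc (0:ℝ) 1, ‖f x‖ ^ 2 ≤ ‖f y‖ ^ 2 + A := by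
    intro y hy
    have h1 : ∫ z in y..x, 2 * inner ℝ (f z) (f' z) = ‖f x‖ ^ 2 - ‖f y‖ ^ 2 :=
      intervalIntegral.integral_eq_sub_of_hasDerivAt (fun z _ => hd z) (hdc.intervalIntegrable _ _)
    have h2 : ‖∫ z in y..x, 2 * inner ℝ (f z) (f' z)‖ ≤ A := by
      refine intervalIntegral.norm_integral_le_integral_norm_uIoc.trans ?_
      rw [← hadd, intervalIntegral.integral_of_le zero_le_one]
      have hcc : Continuous fun y => ‖f y‖ ^ 2 + ‖f' y‖ ^ 2 := by fun_prop
      have hint : IntegrableOn (fun y => ‖f y‖ ^ 2 + ‖f' y‖ ^ 2) (Ioc 0 1) :=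
        hcc.integrableOn_Ioc
      have hsub : uIoc y x ⊆ Ioc 0 1 := by
        intro z hz
        rcases le_total y x with h | h
        · rw [uIoc_of_le h] at hz
          exact ⟨hy.1.trans_lt hz.1, hz.2.trans hx.2⟩
        · rw [uIoc_of_ge h] at hz
          exact ⟨hx.1.trans_lt hz.1, hz.2.trans hy.2⟩
      refine le_trans (setIntegral_mono_on ?_ (hint.mono_set hsub) measurableSet_uIoc
        (fun z _ => hb z)) ?_
      · exact (hdc.norm.integrableOn_Ioc (a := 0) (b := 1)).mono_set hsub
      · exact setIntegral_mono_set hint (Filter.Eventually.of_forall fun z => by positivity)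
          hsub.eventuallyLE
    rw [h1] at h2
    have := (le_abs_self _).trans h2
    linarith
  have h3 : ∫ y in (0:ℝ)..1, ‖f x‖ ^ 2 ≤ ∫ y in (0:ℝ)..1, (‖f y‖ ^ 2 + A) :=
    intervalIntegral.integral_mono_on zero_le_one (by simp)
      ((by fun_prop : Continuous _).intervalIntegrable _ _) key
  rw [intervalIntegral.integral_add ((by fun_prop : Continuous _).intervalIntegrable _ _)
    (by simp)] at h3
  simp only [intervalIntegral.integral_const, sub_zero, one_smul] at h3
  have : 0 ≤ ∫ y in (0:ℝ)..1, ‖f' y‖ ^ 2 :=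
    intervalIntegral.integral_nonneg zero_le_one (fun y _ => by positivity)
  linarith

def Sm (u : ℝ → ℝ → E3) : Prop := ContDiff ℝ (⊤ : ℕ∞) (fun p : ℝ × ℝ => u p.1 p.2)

lemma Sm.hx {u} (h : Sm u) (x t : ℝ) : HasDerivAt (fun y => u y t)
    (fderiv ℝ (fun p : ℝ × ℝ => u p.1 p.2) (x, t) (1, 0)) x := by
  have h1 : HasFDerivAt (fun p : ℝ × ℝ => u p.1 p.2) _ (x, t) :=
    (ContDiff.differentiable h (by simp) (x, t)).hasFDerivAt
  have h2 : HasDerivAt (fun y : ℝ => (y, t)) ((1:ℝ), (0:ℝ)) x :=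
    (hasDerivAt_id x).prodMk (hasDerivAt_const x t)
  exact HasFDerivAt.comp_hasDerivAt x (l := fun p : ℝ × ℝ => u p.1 p.2) h1 h2

lemma Sm.ht {u} (h : Sm u) (x t : ℝ) : HasDerivAt (fun s => u x s)
    (fderiv ℝ (fun p : ℝ × ℝ => u p.1 p.2) (x, t) (0, 1)) t := by
  have h1 : HasFDerivAt (fun p : ℝ × ℝ => u p.1 p.2) _ (x, t) :=
    (ContDiff.differentiable h (by simp) (x, t)).hasFDerivAt
  have h2 : HasDerivAt (fun s : ℝ => (x, s)) ((0:ℝ), (1:ℝ)) t :=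
    (hasDerivAt_const t x).prodMk (hasDerivAt_id t)
  exact HasFDerivAt.comp_hasDerivAt t (l := fun p : ℝ × ℝ => u p.1 p.2) h1 h2

lemma Sm.dx {u} (h : Sm u) (x t : ℝ) : HasDerivAt (fun y => u y t) (pdx u x t) x :=
  (h.hx x t).differentiableAt.hasDerivAt

lemma Sm.dt {u} (h : Sm u) (x t : ℝ) : HasDerivAt (fun s => u x s) (pdt u x t) t :=
  (h.ht x t).differentiableAt.hasDerivAt

lemma Sm.fd {u} (h : Sm u) (v : ℝ × ℝ) : ContDiff ℝ (⊤ : ℕ∞)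
    (fun p => fderiv ℝ (fun p : ℝ × ℝ => u p.1 p.2) p v) :=
  (ContDiff.fderiv_right h (by simp)).clm_apply contDiff_const

lemma Sm.pdx_eq {u} (h : Sm u) : pdx u = fun x t =>
    fderiv ℝ (fun p : ℝ × ℝ => u p.1 p.2) (x, t) (1, 0) := by
  funext x t; exact (h.hx x t).deriv

lemma Sm.pdt_eq {u} (h : Sm u) : pdt u = fun x t =>
    fderiv ℝ (fun p : ℝ × ℝ => u p.1 p.2) (x, t) (0, 1) := by
  funext x t; exact (h.ht x t).deriv

lemma Sm.px {u} (h : Sm u) : Sm (pdx u) := by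
  rw [h.pdx_eq]; exact h.fd (1, 0)

lemma Sm.pt {u} (h : Sm u) : Sm (pdt u) := by
  rw [h.pdt_eq]; exact h.fd (0, 1)

lemma Sm.cont {u} (h : Sm u) (t : ℝ) : Continuous fun x => u x t :=
  (ContDiff.continuous h).comp (by fun_prop : Continuous fun x : ℝ => (x, t))

lemma two_le_top : (2 : WithTop ℕ∞) ≤ ((⊤ : ℕ∞) : WithTop ℕ∞) := by
  have : ((2 : ℕ∞) : WithTop ℕ∞) ≤ ((⊤ : ℕ∞) : WithTop ℕ∞) := WithTop.coe_le_coe.2 le_top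
  exact this

lemma Sm.comm {u} (h : Sm u) : pdt (pdx u) = pdx (pdt u) := by
  have hs : ∀ p, IsSymmSndFDerivAt ℝ (fun p : ℝ × ℝ => u p.1 p.2) p := fun p =>
    (ContDiff.contDiffAt h).isSymmSndFDerivAt (by simp; exact two_le_top)
  have hdf : Differentiable ℝ (fderiv ℝ (fun p : ℝ × ℝ => u p.1 p.2)) :=
    (ContDiff.fderiv_right (m := (⊤ : ℕ∞)) h (by simp)).differentiable (by simp)
  have e : ∀ p v w, fderiv ℝ (fun q => fderiv ℝ (fun p : ℝ × ℝ => u p.1 p.2) q v) p w =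
      fderiv ℝ (fderiv ℝ (fun p : ℝ × ℝ => u p.1 p.2)) p w v := by
    intro p v w
    rw [fderiv_clm_apply (hdf p) (by fun_prop)]
    simp
  rw [h.px.pdt_eq, h.pt.pdx_eq, h.pdx_eq, h.pdt_eq]
  funext x t
  simp only [Prod.mk.eta]
  rw [e, e]
  exact hs _ _ _

lemma cross3_apply (a b : E3) : cross3 a b 0 = a 1 * b 2 - a 2 * b 1 ∧
    cross3 a b 1 = a 2 * b 0 - a 0 * b 2 ∧ cross3 a b 2 = a 0 * b 1 - a 1 * b 0 := by
  simp [cross3, crossProduct]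

lemma nsq (a : E3) : ‖a‖ ^ 2 = a 0 ^ 2 + a 1 ^ 2 + a 2 ^ 2 := by
  rw [EuclideanSpace.real_norm_sq_eq, Fin.sum_univ_three]

lemma inn (a b : E3) : inner ℝ a b = a 0 * b 0 + a 1 * b 1 + a 2 * b 2 := by
  simp [PiLp.inner_apply, Fin.sum_univ_three, mul_comm]

lemma cross_lagrange (a b : E3) : ‖cross3 a b‖ ^ 2 + (inner ℝ a b) ^ 2 = ‖a‖ ^ 2 * ‖b‖ ^ 2 := by
  obtain ⟨h0, h1, h2⟩ := cross3_apply a b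
  rw [nsq, nsq, nsq, inn, h0, h1, h2]; ring

lemma hdw {f : ℝ → E3} {f' : E3} {s : Set ℝ} {t : ℝ} :
    HasDerivWithinAt f f' s t ↔ ∀ i, HasDerivWithinAt (fun t => f t i) (f' i) s t := by
  rw [hasDerivWithinAt_iff_hasFDerivWithinAt, hasFDerivWithinAt_euclidean]
  refine forall_congr' fun i => ?_
  rw [hasDerivWithinAt_iff_hasFDerivWithinAt]
  have : (PiLp.proj 2 (fun _ : Fin 3 => ℝ) i).comp (ContinuousLinearMap.toSpanSingleton ℝ f') =
      ContinuousLinearMap.toSpanSingleton ℝ (f' i) := by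
    ext; simp
  rw [← this]

lemma cross_deriv {f g : ℝ → E3} {f' g' : E3} {s : Set ℝ} {t : ℝ}
    (hf : HasDerivWithinAt f f' s t) (hg : HasDerivWithinAt g g' s t) :
    HasDerivWithinAt (fun t => cross3 (f t) (g t)) (cross3 f' (g t) + cross3 (f t) g') s t := by
  rw [hdw] at hf hg ⊢
  intro i
  fin_cases i
  · simp only [cross3_apply, PiLp.add_apply, Fin.zero_eta, Fin.isValue]
    exact (((hf 1).mul (hg 2)).sub ((hf 2).mul (hg 1))).congr_deriv (by ring)
  · simp only [cross3_apply, PiLp.add_apply, Fin.mk_one, Fin.isValue]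
    exact (((hf 2).mul (hg 0)).sub ((hf 0).mul (hg 2))).congr_deriv (by ring)
  · simp only [cross3_apply, PiLp.add_apply, Fin.reduceFinMk, Fin.isValue]
    exact (((hf 0).mul (hg 1)).sub ((hf 1).mul (hg 0))).congr_deriv (by ring)

lemma pointwise {T : ℝ} (hT : 0 < T) {u : ℝ → ℝ → E3} (hu : IsSol T u) {t : ℝ}
    (ht : t ∈ Icc (0:ℝ) T) {x : ℝ} (hx : x ∈ Ioo (0:ℝ) 1) :
    ‖pdt (pdx (pdx u)) x t‖ ^ 2 ≤ 2 * ‖pdt (pdt u) x t‖ ^ 2 +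
      4 * (‖pdt u x t‖ ^ 2 * ‖pdx (pdx u) x t‖ ^ 2) +
      8 * (‖pdx u x t‖ ^ 2 * ‖pdx (pdt u) x t‖ ^ 2) := by
  obtain ⟨h, hn, he, -⟩ := hu
  have h : Sm u := h
  have hud : UniqueDiffWithinAt ℝ (Icc 0 T) t := uniqueDiffOn_Icc hT t ht
  have hxI : x ∈ Icc (0:ℝ) 1 := Ioo_subset_Icc_self hx
  -- time derivative of the equation
  have e1 : pdt (pdt u) x t =
      cross3 (pdt u x t) (pdx (pdx u) x t) + cross3 (u x t) (pdt (pdx (pdx u)) x t) := by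
    have a := (h.pt.dt x t).hasDerivWithinAt (s := Icc 0 T)
    have b := cross_deriv ((h.dt x t).hasDerivWithinAt (s := Icc 0 T))
      ((h.px.px.dt x t).hasDerivWithinAt (s := Icc 0 T))
    exact hud.eq_deriv _ a (b.congr (fun s hs => he x hxI s hs) (he x hxI t ht))
  -- space derivatives of the constraint
  have c1 : ∀ s ∈ Icc (0:ℝ) T, ∀ y ∈ Ioo (0:ℝ) 1, inner ℝ (u y s) (pdx u y s) = 0 := by
    intro s hs y hy
    have a := (h.dx y s).norm_sq
    have b : HasDerivAt (fun y => ‖u y s‖ ^ 2) 0 y := by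
      refine (hasDerivAt_const y (1:ℝ)).congr_of_eventuallyEq ?_
      filter_upwards [isOpen_Ioo.mem_nhds hy] with z hz
      rw [hn z (Ioo_subset_Icc_self hz) s hs]; norm_num
    have := a.unique b
    linarith
  have c2 : ∀ s ∈ Icc (0:ℝ) T, inner ℝ (u x s) (pdx (pdx u) x s) + ‖pdx u x s‖ ^ 2 = 0 := by
    intro s hs
    have a := (h.dx x s).inner ℝ (h.px.dx x s)
    have b : HasDerivAt (fun y => inner ℝ (u y s) (pdx u y s)) 0 x := by
      refine (hasDerivAt_const x (0:ℝ)).congr_of_eventuallyEq ?_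
      filter_upwards [isOpen_Ioo.mem_nhds hx] with z hz
      exact c1 s hs z hz
    have := a.unique b
    rw [real_inner_self_eq_norm_sq] at this
    exact this
  have c3 : inner ℝ (u x t) (pdt (pdx (pdx u)) x t) + inner ℝ (pdt u x t) (pdx (pdx u) x t)
      + 2 * inner ℝ (pdx u x t) (pdx (pdt u) x t) = 0 := by
    have a := (((h.dt x t).inner ℝ (h.px.px.dt x t)).add
      (h.px.dt x t).norm_sq).hasDerivWithinAt (s := Icc 0 T)
    have b := (hasDerivWithinAt_const t (Icc 0 T) (0:ℝ)).congr
      (fun s hs => c2 s hs) (c2 t ht)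
    have := hud.eq_deriv _ a b
    rw [h.comm] at this
    exact this
  have l1 := cross_lagrange (u x t) (pdt (pdx (pdx u)) x t)
  rw [hn x hxI t ht] at l1
  have l2 := cross_lagrange (pdt u x t) (pdx (pdx u) x t)
  have l3 := cross_lagrange (pdx u x t) (pdx (pdt u) x t)
  have e2 : cross3 (u x t) (pdt (pdx (pdx u)) x t) =
      pdt (pdt u) x t - cross3 (pdt u x t) (pdx (pdx u) x t) := by rw [e1]; abel
  have l4 : ‖cross3 (u x t) (pdt (pdx (pdx u)) x t)‖ ^ 2 ≤
      2 * ‖pdt (pdt u) x t‖ ^ 2 + 2 * ‖cross3 (pdt u x t) (pdx (pdx u) x t)‖ ^ 2 := by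
    rw [e2]
    have := parallelogram_law_with_norm ℝ (pdt (pdt u) x t) (cross3 (pdt u x t) (pdx (pdx u) x t))
    nlinarith [mul_self_nonneg ‖pdt (pdt u) x t + cross3 (pdt u x t) (pdx (pdx u) x t)‖]
  have l5 : inner ℝ (u x t) (pdt (pdx (pdx u)) x t) ^ 2 ≤
      2 * inner ℝ (pdt u x t) (pdx (pdx u) x t) ^ 2
      + 8 * inner ℝ (pdx u x t) (pdx (pdt u) x t) ^ 2 := by
    have : inner ℝ (u x t) (pdt (pdx (pdx u)) x t) = - inner ℝ (pdt u x t) (pdx (pdx u) x t)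
      - 2 * inner ℝ (pdx u x t) (pdx (pdt u) x t) := by linarith
    rw [this]
    nlinarith [sq_nonneg (inner ℝ (pdt u x t) (pdx (pdx u) x t)
      - 2 * inner ℝ (pdx u x t) (pdx (pdt u) x t))]
  have p1 := sq_nonneg ‖cross3 (pdx u x t) (pdx (pdt u) x t)‖
  have p2 : 0 ≤ ‖pdt u x t‖ ^ 2 * ‖pdx (pdx u) x t‖ ^ 2 := by positivity
  nlinarith

theorem utxx_estimate_schrodinger_flow :
    ∃ C > (0:ℝ), ∀ T > (0:ℝ), ∀ u : ℝ → ℝ → E3, IsSol T u →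
      ∀ t ∈ Icc (0:ℝ) T,
        (∫ x in (0:ℝ)..1, ‖pdt (pdx (pdx u)) x t‖ ^ 2)
          ≤ C * L2sq (fun x => pdt (pdt u) x t)
            + C * (Hsq 2 (fun x => u x t) + 1) ^ 2 * Hsq 1 (fun x => pdt u x t) := by
  refine ⟨24, by norm_num, fun T hT u hu t ht => ?_⟩
  have h : Sm u := hu.1
  have H2 : Hsq 2 (fun x => u x t) = (∫ x in (0:ℝ)..1, ‖u x t‖ ^ 2) +
      (∫ x in (0:ℝ)..1, ‖pdx u x t‖ ^ 2) + ∫ x in (0:ℝ)..1, ‖pdx (pdx u) x t‖ ^ 2 := by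
    simp only [Hsq, Finset.sum_range_succ, Finset.sum_range_zero, zero_add]
    rfl
  have H1 : Hsq 1 (fun x => pdt u x t) = (∫ x in (0:ℝ)..1, ‖pdt u x t‖ ^ 2) +
      (∫ x in (0:ℝ)..1, ‖pdx (pdt u) x t‖ ^ 2) := by
    simp only [Hsq, Finset.sum_range_succ, Finset.sum_range_zero, zero_add]
    rfl
  have s1 := sob (fun x => pdt u x t) (fun x => pdx (pdt u) x t) (fun x => h.pt.dx x t)
    (h.pt.px.cont t)
  have s2 := sob (fun x => pdx u x t) (fun x => pdx (pdx u) x t) (fun x => h.px.dx x t)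
    (h.px.px.cont t)
  have nn : ∀ f : ℝ → E3, 0 ≤ ∫ x in (0:ℝ)..1, ‖f x‖ ^ 2 := fun f =>
    intervalIntegral.integral_nonneg zero_le_one (fun y _ => by positivity)
  have n0 := nn (fun x => u x t)
  have n1 := nn (fun x => pdx u x t)
  have n2 := nn (fun x => pdx (pdx u) x t)
  have n3 := nn (fun x => pdt u x t)
  have n4 := nn (fun x => pdx (pdt u) x t)
  have n5 := nn (fun x => pdt (pdt u) x t)
  rw [← H1] at s1
  set A := Hsq 2 (fun x => u x t)
  set B := Hsq 1 (fun x => pdt u x t)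
  have c5 := h.pt.pt.cont t
  have c2 := h.px.px.cont t
  have c4 := h.pt.px.cont t
  have i5 : IntervalIntegrable (fun x => 2 * ‖pdt (pdt u) x t‖ ^ 2) volume 0 1 :=
    (by fun_prop : Continuous _).intervalIntegrable _ _
  have i2 : IntervalIntegrable (fun x => (8 * B) * ‖pdx (pdx u) x t‖ ^ 2) volume 0 1 :=
    (by fun_prop : Continuous _).intervalIntegrable _ _
  have i4 : IntervalIntegrable (fun x => (16 * A) * ‖pdx (pdt u) x t‖ ^ 2) volume 0 1 :=
    (by fun_prop : Continuous _).intervalIntegrable _ _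
  have main : (∫ x in (0:ℝ)..1, ‖pdt (pdx (pdx u)) x t‖ ^ 2) ≤
      ∫ x in (0:ℝ)..1, (2 * ‖pdt (pdt u) x t‖ ^ 2 + (8 * B) * ‖pdx (pdx u) x t‖ ^ 2
        + (16 * A) * ‖pdx (pdt u) x t‖ ^ 2) := by
    refine intervalIntegral.integral_mono_on_of_le_Ioo zero_le_one
      (((h.px.px.pt.cont t).norm.pow 2).intervalIntegrable _ _) ((i5.add i2).add i4) ?_
    intro x hx
    refine (pointwise hT hu ht hx).trans ?_
    have a1 := mul_le_mul_of_nonneg_right (s1 x (Ioo_subset_Icc_self hx))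
      (sq_nonneg ‖pdx (pdx u) x t‖)
    have a2 := mul_le_mul_of_nonneg_right ((s2 x (Ioo_subset_Icc_self hx)).trans
      (by linarith : _ ≤ 2 * A)) (sq_nonneg ‖pdx (pdt u) x t‖)
    linarith
  rw [intervalIntegral.integral_add (i5.add i2) i4, intervalIntegral.integral_add i5 i2,
    intervalIntegral.integral_const_mul, intervalIntegral.integral_const_mul,
    intervalIntegral.integral_const_mul] at main
  refine main.trans ?_
  unfold L2sq
  have hA : 0 ≤ A := by linarith
  have hB : 0 ≤ B := by linarith
  have b1 := mul_le_mul_of_nonneg_left (by linarith : _ ≤ A) (by positivity : 0 ≤ 8 * B)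
    (b := ∫ x in (0:ℝ)..1, ‖pdx (pdx u) x t‖ ^ 2)
  have b2 := mul_le_mul_of_nonneg_left (by linarith : _ ≤ B) (by positivity : 0 ≤ 16 * A)
    (b := ∫ x in (0:ℝ)..1, ‖pdx (pdt u) x t‖ ^ 2)
  have b3 : 0 ≤ (A ^ 2 + A + 1) * B := by positivity
  nlinarith

end
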